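/- arXiv:2602.10700 — 4 statements merged into one kernel-verified Lean document; each statement's English description precedes it below -/
import Mathlib

section
/- Let γ > 1 and ρ̄ > 0, and set C₁(γ) := 1/γ − (1/4)^{γ−1} and C₂(γ) := (1/γ)(4/3)^γ. Then C₁(γ) > 0, and for every real number ρ with ρ ≥ 4ρ̄ one has C₁(γ)(ρ − ρ̄)^γ ≤ Π(ρ) ≤ C₂(γ)(ρ − ρ̄)^γ. -/
/-- The potential energy density `Π(ρ) = (1/γ)ρ^γ − (1/γ)ρ̄^γ − ρ̄^{γ−1}(ρ − ρ̄)`. -/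
noncomputable def potEnergy (γ ρb ρ : ℝ) : ℝ :=
  (1 / γ) * ρ ^ γ - (1 / γ) * ρb ^ γ - ρb ^ (γ - 1) * (ρ - ρb)

/-- auxiliary: `γ < 4^(γ-1)`. -/
theorem aux_four (γ : ℝ) (hγ : 1 < γ) : γ < (4 : ℝ) ^ (γ - 1) := by
  have h4 : 1 < Real.log 4 := by
    have : Real.log 4 = 2 * Real.log 2 := by
      rw [show (4 : ℝ) = 2 ^ 2 by norm_num, Real.log_pow]; norm_num
    rw [this]
    linarith [Real.log_two_gt_d9]
  rw [Real.rpow_def_of_pos (by norm_num)]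
  have := Real.add_one_le_exp (Real.log 4 * (γ - 1))
  nlinarith

theorem stmt1 (γ ρb : ℝ) (hγ : 1 < γ) (hρb : 0 < ρb) :
    0 < 1 / γ - (1 / 4 : ℝ) ^ (γ - 1) ∧
    ∀ ρ : ℝ, 4 * ρb ≤ ρ →
      (1 / γ - (1 / 4 : ℝ) ^ (γ - 1)) * (ρ - ρb) ^ γ ≤ potEnergy γ ρb ρ ∧
      potEnergy γ ρb ρ ≤ (1 / γ) * (4 / 3 : ℝ) ^ γ * (ρ - ρb) ^ γ := by
  have hB := aux_four γ hγ
  have hγ0 : 0 < γ := by linarith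
  have hinv : (1 / 4 : ℝ) ^ (γ - 1) = 1 / (4 : ℝ) ^ (γ - 1) := by
    rw [Real.div_rpow (by norm_num) (by norm_num), Real.one_rpow]
  have hpos : 0 < 1 / γ - (1 / 4 : ℝ) ^ (γ - 1) := by
    rw [hinv, sub_pos]
    exact one_div_lt_one_div_of_lt hγ0 hB
  refine ⟨hpos, fun ρ hρ => ?_⟩
  have hρ0 : 0 < ρ := by linarith
  have hD : 0 < ρb ^ (γ - 1) := Real.rpow_pos_of_pos hρb _
  have hγi : 0 < 1 / γ := by positivity
  have hγi1 : 1 / γ ≤ 1 := by rw [div_le_one hγ0]; exact hγ.le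
  have hbγ : ρb ^ γ = ρb * ρb ^ (γ - 1) := by
    rw [Real.rpow_sub_one hρb.ne']; field_simp
  have hργ : ρ ^ γ = ρ * ρ ^ (γ - 1) := by
    rw [Real.rpow_sub_one hρ0.ne']; field_simp
  unfold potEnergy
  constructor
  · have hT : (ρ - ρb) ^ γ ≤ ρ ^ γ :=
      Real.rpow_le_rpow (by linarith) (by linarith) hγ0.le
    have hA : ρb ^ (γ - 1) ≤ (1 / 4 : ℝ) ^ (γ - 1) * ρ ^ (γ - 1) := by
      rw [← Real.mul_rpow (by norm_num) hρ0.le]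
      exact Real.rpow_le_rpow hρb.le (by linarith) (by linarith)
    have h1 := mul_le_mul_of_nonneg_left hT hpos.le
    have h2 := mul_le_mul_of_nonneg_left hA hρ0.le
    have h3 := mul_le_mul_of_nonneg_right hγi1 (mul_pos hρb hD).le
    rw [hργ] at h1 ⊢
    rw [hbγ]
    linarith
  · have h1 : ρ ^ γ ≤ (4 / 3 : ℝ) ^ γ * (ρ - ρb) ^ γ := by
      rw [← Real.mul_rpow (by norm_num) (by linarith)]
      exact Real.rpow_le_rpow hρ0.le (by linarith) hγ0.le
    have h2 := mul_le_mul_of_nonneg_left h1 hγi.le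
    have h3 : 0 ≤ (1 / γ) * ρb ^ γ := by positivity
    have h4 : 0 ≤ ρb ^ (γ - 1) * (ρ - ρb) := mul_nonneg hD.le (by linarith)
    linarith
end

section
/- Let γ > 1 and ρ̄ > 0. There exists a constant C > 0, depending only on γ and ρ̄, such that the following holds: for every E₀ > 0 and every function ρ : ℝ³ → [0,∞) such that the map g : x ↦ √(ρ(x)) is continuously differentiable, with ∫_{ℝ³} Π(ρ(x)) dx ≤ E₀ and ∫_{ℝ³} |∇g(x)|² dx ≤ E₀, one has (∫_{ℝ³} (ρ(x) − ρ̄)² dx)^{1/2} ≤ C(1 + E₀). -/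
open MeasureTheory

open scoped NNReal ENNReal

lemma potEnergy_lower (γ ρb r : ℝ) (hγ : 1 < γ) (hρb : 0 < ρb) (hr : 0 ≤ r) :
    (γ - 1) * ρb ^ (γ - 1) * (Real.sqrt r - Real.sqrt ρb) ^ 2 ≤ γ * potEnergy γ ρb r := by
  set a := Real.sqrt ρb with ha
  set t := Real.sqrt r with ht
  have ha0 : 0 < a := Real.sqrt_pos.2 hρb
  have ht0 : 0 ≤ t := Real.sqrt_nonneg r
  have hra : ρb = a ^ 2 := (Real.sq_sqrt hρb.le).symm
  have hrt : r = t ^ 2 := (Real.sq_sqrt hr).symm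
  clear_value a t
  subst hra hrt
  have h1 : (t ^ 2) ^ γ = t ^ (2 * γ) := by
    rw [← Real.rpow_natCast t 2, ← Real.rpow_mul ht0]; norm_num
  have h2 : (a ^ 2) ^ γ = a ^ (2 * γ - 2) * a ^ 2 := by
    rw [← Real.rpow_natCast a 2, ← Real.rpow_mul ha0.le, ← Real.rpow_add ha0]; norm_num
  have h3 : (a ^ 2) ^ (γ - 1) = a ^ (2 * γ - 2) := by
    rw [← Real.rpow_natCast a 2, ← Real.rpow_mul ha0.le]; congr 1; push_cast; ring
  have hd : 0 < 2 * γ - 1 := by linarith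
  have key := Real.geom_mean_le_arith_mean2_weighted (w₁ := 1 / (2 * γ - 1))
    (w₂ := (2 * γ - 2) / (2 * γ - 1)) (p₁ := t ^ (2 * γ)) (p₂ := a ^ (2 * γ - 1) * t)
    (by positivity) (div_nonneg (by linarith) hd.le) (by positivity) (by positivity)
    (by field_simp; ring)
  have h4 : (t ^ (2 * γ)) ^ (1 / (2 * γ - 1)) *
      (a ^ (2 * γ - 1) * t) ^ ((2 * γ - 2) / (2 * γ - 1)) = a ^ (2 * γ - 2) * t ^ 2 := by
    rw [Real.mul_rpow (by positivity) ht0, ← Real.rpow_mul ht0, ← Real.rpow_mul ha0.le,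
      mul_left_comm, ← Real.rpow_add_of_nonneg ht0 (mul_nonneg (by linarith) (by positivity)) (div_nonneg (by linarith) hd.le),
      ← Real.rpow_natCast t 2]
    congr 2
    · field_simp
    · field_simp; push_cast; ring
  rw [h4] at key
  have h5 : a ^ (2 * γ - 1) = a ^ (2 * γ - 2) * a := by
    rw [← Real.rpow_add_one ha0.ne']; congr 1; ring
  rw [h5] at key
  have key2 : (2 * γ - 1) * (a ^ (2 * γ - 2) * t ^ 2) ≤
      t ^ (2 * γ) + (2 * γ - 2) * (a ^ (2 * γ - 2) * a * t) := by
    calc _ ≤ (2 * γ - 1) * _ := mul_le_mul_of_nonneg_left key hd.le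
      _ = _ := by field_simp
  unfold potEnergy
  rw [h1, h2, h3]
  have : γ * (1 / γ * t ^ (2 * γ) - 1 / γ * (a ^ (2 * γ - 2) * a ^ 2) -
      a ^ (2 * γ - 2) * (t ^ 2 - a ^ 2)) = t ^ (2 * γ) - a ^ (2 * γ - 2) * a ^ 2 -
      γ * (a ^ (2 * γ - 2) * (t ^ 2 - a ^ 2)) := by field_simp
  rw [this]
  nlinarith

abbrev E3 := EuclideanSpace ℝ (Fin 3)

lemma cutoffs : ∃ K : ℝ≥0, ∃ χ : ℕ → E3 → ℝ, (∀ n, ContDiff ℝ 1 (χ n)) ∧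
    (∀ n, HasCompactSupport (χ n)) ∧ (∀ n x, ‖χ n x‖ ≤ 1) ∧ (∀ n x, ‖fderiv ℝ (χ n) x‖ ≤ K) ∧
    ∀ x, ∀ᶠ n in Filter.atTop, χ n x = 1 := by
  let f : ContDiffBump (0 : E3) := ⟨1, 2, by norm_num, by norm_num⟩
  have hf : ContDiff ℝ 1 (f : E3 → ℝ) := f.contDiff
  obtain ⟨K, hK⟩ := (f.hasCompactSupport.fderiv (𝕜 := ℝ)).exists_bound_of_continuous
    (hf.continuous_fderiv one_ne_zero)
  have hc : ∀ n : ℕ, ((n : ℝ) + 1)⁻¹ ≠ 0 := fun n => by positivity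
  refine ⟨⟨K, (norm_nonneg _).trans (hK 0)⟩, fun n x => f (((n : ℝ) + 1)⁻¹ • x), ?_, ?_, ?_, ?_, ?_⟩
  · intro n
    exact hf.comp (contDiff_const_smul _)
  · intro n
    exact f.hasCompactSupport.comp_smul (hc n)
  · intro n x
    rw [Real.norm_of_nonneg f.nonneg]
    exact f.le_one
  · intro n x
    have := fderiv_comp_smul (𝕜 := ℝ) (f := (f : E3 → ℝ)) (((n : ℝ) + 1)⁻¹) (x := x)
    rw [this, norm_smul]
    have h1 : ‖((n : ℝ) + 1)⁻¹‖ ≤ 1 := by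
      rw [Real.norm_of_nonneg (by positivity)]
      exact inv_le_one_of_one_le₀ (by linarith [n.cast_nonneg (α := ℝ)])
    calc _ ≤ 1 * K := mul_le_mul h1 (hK _) (norm_nonneg _) zero_le_one
      _ = K := one_mul _
  · intro x
    filter_upwards [Filter.eventually_ge_atTop (Nat.ceil ‖x‖)] with n hn
    apply f.one_of_mem_closedBall
    rw [mem_closedBall_zero_iff, norm_smul, Real.norm_of_nonneg (by positivity)]
    change _ ≤ (1 : ℝ)
    rw [inv_mul_le_one₀ (by positivity)]
    have := Nat.ceil_le.1 hn
    linarith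

lemma sobolev : ∃ S : ℝ≥0, ∀ u : E3 → ℝ, ContDiff ℝ 1 u →
    eLpNorm u 6 volume ≤ S * (eLpNorm (fderiv ℝ u) 2 volume + eLpNorm u 2 volume) := by
  obtain ⟨K, χ, h1, h2, h3, h4, h5⟩ := cutoffs
  let S := SNormLESNormFDerivOfEqConst ℝ (volume : Measure E3) ((2 : ℝ≥0) : ℝ)
  refine ⟨S * (K + 1), fun u hu => ?_⟩
  have hfu := hu.continuous_fderiv one_ne_zero
  have hb : ∀ n, eLpNorm (fun x => χ n x * u x) 6 volume ≤
      S * (eLpNorm (fderiv ℝ u) 2 volume + K * eLpNorm u 2 volume) := by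
    intro n
    have hs := eLpNorm_le_eLpNorm_fderiv_of_eq (volume : Measure E3) (F := ℝ) (p := 2) (p' := 6)
      (u := fun x => χ n x * u x) ((h1 n).mul hu) ((h2 n).mul_right) (by norm_num) (by simp)
      (by simp; norm_num)
    refine hs.trans (mul_le_mul' le_rfl ?_)
    have hcont : Continuous (fun x => ‖fderiv ℝ u x‖ + K * ‖u x‖) := by
      have := hu.continuous
      fun_prop
    calc eLpNorm (fderiv ℝ fun x => χ n x * u x) 2 volume
        ≤ eLpNorm ((fun x => ‖fderiv ℝ u x‖) + fun x => K * ‖u x‖) 2 volume := by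
          refine eLpNorm_mono_real fun x => ?_
          rw [fderiv_fun_mul ((h1 n).differentiable one_ne_zero x) (hu.differentiable one_ne_zero x)]
          refine (norm_add_le _ _).trans ?_
          rw [norm_smul, norm_smul]
          have a1 := mul_le_mul_of_nonneg_right (h3 n x) (norm_nonneg (fderiv ℝ u x))
          have a2 := mul_le_mul_of_nonneg_left (h4 n x) (norm_nonneg (u x))
          simp only [Pi.add_apply]
          linarith
      _ ≤ _ := eLpNorm_add_le hfu.norm.aestronglyMeasurable
          (by have := hu.continuous; fun_prop) (by norm_num)
      _ = _ := by
        rw [eLpNorm_norm]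
        congr 1
        have := eLpNorm_const_smul (K : ℝ) (fun x => ‖u x‖) 2 (volume : Measure E3)
        simp only [eLpNorm_norm] at this
        rw [← show ‖(K : ℝ)‖ₑ = (K : ℝ≥0∞) by simp [enorm, nnnorm]]
        exact this
  have hlim := Lp.eLpNorm_lim_le_liminf_eLpNorm (p := 6) (μ := (volume : Measure E3))
    (f := fun n x => χ n x * u x)
    (fun n => ((h1 n).continuous.mul hu.continuous).aestronglyMeasurable) u
    (Filter.Eventually.of_forall fun x => by
      apply tendsto_const_nhds.congr'
      filter_upwards [h5 x] with n hn
      simp [hn])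
  calc _ ≤ _ := hlim
    _ ≤ S * (eLpNorm (fderiv ℝ u) 2 volume + K * eLpNorm u 2 volume) :=
      Filter.liminf_le_of_frequently_le' (Filter.Frequently.of_forall hb)
    _ ≤ S * ((K + 1) * eLpNorm (fderiv ℝ u) 2 volume + (K + 1) * eLpNorm u 2 volume) := by
      gcongr
      · exact le_mul_of_one_le_left (zero_le) le_add_self
      · exact le_self_add
    _ = _ := by push_cast; ring

lemma interp (u : E3 → ℝ) (hu : Continuous u) :
    ∫⁻ x, ‖u x‖ₑ ^ 4 ≤ eLpNorm u 2 volume * eLpNorm u 6 volume ^ 3 := by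
  have hm : AEMeasurable (fun x => ‖u x‖ₑ) (volume : Measure E3) := hu.enorm.aemeasurable
  have := ENNReal.lintegral_mul_le_Lp_mul_Lq (volume : Measure E3) (p := 2) (q := 2)
    Real.HolderConjugate.two_two hm (hm.pow_const 3)
  rw [eLpNorm_eq_lintegral_rpow_enorm_toReal (by norm_num) (by norm_num),
    eLpNorm_eq_lintegral_rpow_enorm_toReal (by norm_num) (by norm_num), ← ENNReal.rpow_natCast _ 3,
    ← ENNReal.rpow_mul]
  refine le_trans (le_of_eq ?_) (this.trans (le_of_eq ?_))
  · refine lintegral_congr fun x => ?_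
    simp only [Pi.mul_apply]; ring
  · congr 2
    · refine lintegral_congr fun x => ?_
      rw [← ENNReal.rpow_natCast, ← ENNReal.rpow_mul]; norm_num
    · norm_num

theorem stmt7 (γ ρb : ℝ) (hγ : 1 < γ) (hρb : 0 < ρb) :
    ∃ C : ℝ, 0 < C ∧
      ∀ E₀ : ℝ, 0 < E₀ →
        ∀ ρ : EuclideanSpace ℝ (Fin 3) → ℝ, (∀ x, 0 ≤ ρ x) →
          ContDiff ℝ 1 (fun x => Real.sqrt (ρ x)) →
          (∫⁻ x, ENNReal.ofReal (potEnergy γ ρb (ρ x))) ≤ ENNReal.ofReal E₀ →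
          (∫⁻ x, ENNReal.ofReal (‖fderiv ℝ (fun y => Real.sqrt (ρ y)) x‖ ^ 2)) ≤
            ENNReal.ofReal E₀ →
          (∫⁻ x, ENNReal.ofReal ((ρ x - ρb) ^ 2)) ^ ((1 : ℝ) / 2) ≤
            ENNReal.ofReal (C * (1 + E₀)) := by
  obtain ⟨S, hS⟩ := sobolev
  have hc0 : 0 < (γ - 1) * ρb ^ (γ - 1) := mul_pos (by linarith) (by positivity)
  obtain ⟨k, hk0, hk⟩ : ∃ k : ℝ, 0 ≤ k ∧ k ^ 2 = γ / ((γ - 1) * ρb ^ (γ - 1)) :=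
    ⟨_, Real.sqrt_nonneg _, Real.sq_sqrt (by positivity)⟩
  set c1 : ℝ := 2 * (k * (S * (1 + k)) ^ 3) with hc1
  set c2 : ℝ := 8 * ρb * k ^ 2 with hc2
  have hc1' : 0 ≤ c1 := by positivity
  have hc2' : 0 ≤ c2 := by positivity
  refine ⟨c1 + c2 + 1, by positivity, fun E₀ hE ρ hρ hg hP hD => ?_⟩
  obtain ⟨r, hr0, hr⟩ : ∃ r : ℝ, 0 ≤ r ∧ r ^ 2 = E₀ := ⟨_, Real.sqrt_nonneg _, Real.sq_sqrt hE.le⟩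
  let u : E3 → ℝ := fun x => Real.sqrt (ρ x) - Real.sqrt ρb
  have hu : ContDiff ℝ 1 u := hg.sub contDiff_const
  have hfu : fderiv ℝ u = fderiv ℝ (fun y => Real.sqrt (ρ y)) := by
    funext x; exact fderiv_sub_const _
  have sq2 : ∀ a : ℝ, 0 ≤ a → ENNReal.ofReal (a ^ 2) ^ ((1 : ℝ) / 2) = ENNReal.ofReal a := by
    intro a ha
    rw [ENNReal.ofReal_rpow_of_nonneg (by positivity) (by norm_num), ← Real.sqrt_eq_rpow,
      Real.sqrt_sq ha]
  have hD2 : eLpNorm (fderiv ℝ u) 2 volume ≤ ENNReal.ofReal r := by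
    rw [eLpNorm_eq_lintegral_rpow_enorm_toReal (by norm_num) (by norm_num), ← sq2 r hr0, hr, hfu]
    refine ENNReal.rpow_le_rpow (le_trans (le_of_eq ?_) hD) (by norm_num)
    refine lintegral_congr fun x => ?_
    rw [ENNReal.ofReal_pow (norm_nonneg _), ofReal_norm]
    norm_num
  have hU2 : ∫⁻ x, ENNReal.ofReal (u x ^ 2) ≤ ENNReal.ofReal ((k * r) ^ 2) := by
    calc _ ≤ ∫⁻ x, ENNReal.ofReal (k ^ 2) * ENNReal.ofReal (potEnergy γ ρb (ρ x)) := by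
          refine lintegral_mono fun x => ?_
          rw [← ENNReal.ofReal_mul (by positivity)]
          apply ENNReal.ofReal_le_ofReal
          rw [hk, div_mul_eq_mul_div, le_div_iff₀ hc0, mul_comm]
          exact potEnergy_lower γ ρb (ρ x) hγ hρb (hρ x)
      _ = ENNReal.ofReal (k ^ 2) * ∫⁻ x, ENNReal.ofReal (potEnergy γ ρb (ρ x)) :=
          lintegral_const_mul' _ _ ENNReal.ofReal_ne_top
      _ ≤ ENNReal.ofReal (k ^ 2) * ENNReal.ofReal E₀ := by gcongr
      _ = _ := by rw [← ENNReal.ofReal_mul (by positivity), mul_pow, hr]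
  have hN2 : eLpNorm u 2 volume ≤ ENNReal.ofReal (k * r) := by
    rw [eLpNorm_eq_lintegral_rpow_enorm_toReal (by norm_num) (by norm_num),
      ← sq2 (k * r) (by positivity)]
    refine ENNReal.rpow_le_rpow (le_trans (le_of_eq ?_) hU2) (by norm_num)
    refine lintegral_congr fun x => ?_
    rw [← sq_abs, ENNReal.ofReal_pow (abs_nonneg _), ← Real.norm_eq_abs, ofReal_norm]
    norm_num
  have hN6 : eLpNorm u 6 volume ≤ ENNReal.ofReal (S * (1 + k) * r) := by
    refine (hS u hu).trans ?_
    calc _ ≤ (S : ℝ≥0∞) * (ENNReal.ofReal r + ENNReal.ofReal (k * r)) := by gcongr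
      _ = _ := by
        rw [← ENNReal.ofReal_add hr0 (by positivity), ← ENNReal.ofReal_coe_nnreal,
          ← ENNReal.ofReal_mul (by positivity)]
        congr 1; ring
  have hU4 : ∫⁻ x, ENNReal.ofReal (u x ^ 4) ≤ ENNReal.ofReal (k * r * (S * (1 + k) * r) ^ 3) := by
    calc _ = ∫⁻ x, ‖u x‖ₑ ^ 4 := by
          refine lintegral_congr fun x => ?_
          rw [← ofReal_norm, ← ENNReal.ofReal_pow (norm_nonneg _), Real.norm_eq_abs,
            Even.pow_abs (by decide)]
      _ ≤ _ := interp u hu.continuous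
      _ ≤ ENNReal.ofReal (k * r) * ENNReal.ofReal (S * (1 + k) * r) ^ 3 := by gcongr
      _ = _ := by
        rw [← ENNReal.ofReal_pow (by positivity), ← ENNReal.ofReal_mul (by positivity)]
  rw [← sq2 ((c1 + c2 + 1) * (1 + E₀)) (by positivity)]
  refine ENNReal.rpow_le_rpow ?_ (by norm_num)
  have hcu := hu.continuous
  calc ∫⁻ x, ENNReal.ofReal ((ρ x - ρb) ^ 2)
      ≤ ∫⁻ x, (ENNReal.ofReal 2 * ENNReal.ofReal (u x ^ 4) +
          ENNReal.ofReal (8 * ρb) * ENNReal.ofReal (u x ^ 2)) := by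
        refine lintegral_mono fun x => ?_
        rw [← ENNReal.ofReal_mul (by positivity), ← ENNReal.ofReal_mul (by positivity),
          ← ENNReal.ofReal_add (by positivity) (by positivity)]
        apply ENNReal.ofReal_le_ofReal
        have e1 := Real.sq_sqrt (hρ x)
        have e2 := Real.sq_sqrt hρb.le
        have e3 : ρ x - ρb = u x ^ 2 + 2 * Real.sqrt ρb * u x := by
          simp only [u]; linear_combination -e1 + e2
        have e4 : 8 * ρb * u x ^ 2 = 2 * (2 * Real.sqrt ρb * u x) ^ 2 := by
          linear_combination (-8 * u x ^ 2) * e2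
        rw [e3, e4]
        nlinarith [sq_nonneg (u x ^ 2 - 2 * Real.sqrt ρb * u x)]
    _ = ENNReal.ofReal 2 * (∫⁻ x, ENNReal.ofReal (u x ^ 4)) +
          ENNReal.ofReal (8 * ρb) * ∫⁻ x, ENNReal.ofReal (u x ^ 2) := by
        rw [lintegral_add_left (by fun_prop), lintegral_const_mul' _ _ ENNReal.ofReal_ne_top,
          lintegral_const_mul' _ _ ENNReal.ofReal_ne_top]
    _ ≤ ENNReal.ofReal 2 * ENNReal.ofReal (k * r * (S * (1 + k) * r) ^ 3) +
          ENNReal.ofReal (8 * ρb) * ENNReal.ofReal ((k * r) ^ 2) := by gcongr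
    _ = ENNReal.ofReal (c1 * E₀ ^ 2 + c2 * E₀) := by
        rw [← ENNReal.ofReal_mul (by positivity), ← ENNReal.ofReal_mul (by positivity),
          ← ENNReal.ofReal_add (by positivity) (by positivity), hc1, hc2, ← hr]
        congr 1; ring
    _ ≤ _ := by
        apply ENNReal.ofReal_le_ofReal
        have b1 : c1 * E₀ ^ 2 + c2 * E₀ ≤ (c1 + c2 + 1) * (1 + E₀) ^ 2 := by
          have : 0 ≤ c1 * E₀ := by positivity
          have : 0 ≤ c2 * E₀ := by positivity
          have : 0 ≤ c2 * E₀ ^ 2 := by positivity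
          nlinarith
        have b2 : (c1 + c2 + 1) * (1 + E₀) ^ 2 ≤ (c1 + c2 + 1) ^ 2 * (1 + E₀) ^ 2 := by
          gcongr
          nlinarith [mul_nonneg (add_nonneg hc1' hc2') (add_nonneg hc1' hc2')]
        rw [mul_pow]; linarith
end

section
/- Let ρ : ℝ × ℝ³ → ℝ be continuously differentiable in time and twice continuously differentiable in space with ρ(t,x) > 0 everywhere, and let v : ℝ × ℝ³ → ℝ³ be continuously differentiable in space. Assume that ∂ₜρ + div_x(ρv) − Δ_xρ = 0 holds at every point (t,x). Then the function w := ρ⁻¹ satisfies, at every point (t,x), ∂ₜw − Δ_x w + 2ρ|∇_x w|² + v·∇_x w − w · div_x v = 0. -/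
/-- Partial derivative `∂ᵢ f` of a scalar function on `ℝ³`. -/
noncomputable def pd (f : EuclideanSpace ℝ (Fin 3) → ℝ) (i : Fin 3)
    (x : EuclideanSpace ℝ (Fin 3)) : ℝ :=
  fderiv ℝ f x (EuclideanSpace.single i 1)

/-- Divergence `∑ᵢ ∂ᵢ fᵢ` of a vector field on `ℝ³`. -/
noncomputable def divg (f : EuclideanSpace ℝ (Fin 3) → EuclideanSpace ℝ (Fin 3))
    (x : EuclideanSpace ℝ (Fin 3)) : ℝ :=
  ∑ i, pd (fun y => f y i) i x

/-- Laplacian `∑ᵢ ∂ᵢ² f` of a scalar function on `ℝ³`. -/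
noncomputable def lap (f : EuclideanSpace ℝ (Fin 3) → ℝ)
    (x : EuclideanSpace ℝ (Fin 3)) : ℝ :=
  ∑ i, pd (pd f i) i x

theorem pd_mul_aux {f g : EuclideanSpace ℝ (Fin 3) → ℝ} {x : EuclideanSpace ℝ (Fin 3)}
    (hf : DifferentiableAt ℝ f x) (hg : DifferentiableAt ℝ g x) (i : Fin 3) :
    pd (fun y => f y * g y) i x = f x * pd g i x + g x * pd f i x := by
  unfold pd
  have h : fderiv ℝ (fun y => f y * g y) x = _ := (hf.hasFDerivAt.mul hg.hasFDerivAt).fderiv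
  rw [h]
  simp

theorem pd_inv_aux {f : EuclideanSpace ℝ (Fin 3) → ℝ} {x : EuclideanSpace ℝ (Fin 3)}
    (hf : DifferentiableAt ℝ f x) (h0 : f x ≠ 0) (i : Fin 3) :
    pd (fun y => (f y)⁻¹) i x = -((f x)⁻¹ * (f x)⁻¹) * pd f i x := by
  have hinv : DifferentiableAt ℝ (fun y => (f y)⁻¹) x := hf.inv h0
  unfold pd
  have h := (hasDerivAt_inv h0).comp_hasFDerivAt x hf.hasFDerivAt
  have h2 : fderiv ℝ (fun y => (f y)⁻¹) x = _ := h.fderiv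
  rw [h2]
  simp [pow_two]

theorem pd_diff_aux {f : EuclideanSpace ℝ (Fin 3) → ℝ} (hf : ContDiff ℝ 2 f) (i : Fin 3) :
    Differentiable ℝ (pd f i) := by
  have h : ContDiff ℝ 1 (fderiv ℝ f) := hf.fderiv_right (by norm_num)
  have h2 : Differentiable ℝ (fderiv ℝ f) := h.differentiable (by norm_num)
  unfold pd
  fun_prop

theorem pd_pd_inv_aux {f : EuclideanSpace ℝ (Fin 3) → ℝ} (hf : ContDiff ℝ 2 f)
    (h0 : ∀ y, f y ≠ 0) (x : EuclideanSpace ℝ (Fin 3)) (i : Fin 3) :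
    pd (pd (fun y => (f y)⁻¹) i) i x =
      2 * (f x)⁻¹ ^ 3 * (pd f i x) ^ 2 - (f x)⁻¹ ^ 2 * pd (pd f i) i x := by
  have hd : Differentiable ℝ f := hf.differentiable (by norm_num)
  have hinv : DifferentiableAt ℝ (fun y => (f y)⁻¹) x := (hd x).inv (h0 x)
  have hp := pd_diff_aux hf i
  have e : pd (fun y => (f y)⁻¹) i =
      fun y => (f y)⁻¹ * ((f y)⁻¹ * ((-1) * pd f i y)) := by
    funext y
    rw [pd_inv_aux (hd y) (h0 y)]
    ring
  have hc : DifferentiableAt ℝ (fun _ : EuclideanSpace ℝ (Fin 3) => (-1 : ℝ)) x :=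
    differentiableAt_const _
  have hc0 : pd (fun _ : EuclideanSpace ℝ (Fin 3) => (-1 : ℝ)) i x = 0 := by
    simp [pd]
  have h1 : DifferentiableAt ℝ (fun y => (-1) * pd f i y) x := hc.mul (hp x)
  have h2 : DifferentiableAt ℝ (fun y => (f y)⁻¹ * ((-1) * pd f i y)) x := hinv.mul h1
  rw [e, pd_mul_aux hinv h2, pd_mul_aux hinv h1,
    pd_mul_aux hc (hp x), pd_inv_aux (hd x) (h0 x), hc0]
  ring

theorem stmt14 (ρ : ℝ → EuclideanSpace ℝ (Fin 3) → ℝ)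
    (v : ℝ → EuclideanSpace ℝ (Fin 3) → EuclideanSpace ℝ (Fin 3))
    (hρt : ∀ x, ContDiff ℝ 1 (fun t => ρ t x))
    (hρx : ∀ t, ContDiff ℝ 2 (ρ t))
    (hpos : ∀ t x, 0 < ρ t x)
    (hv : ∀ t, ContDiff ℝ 1 (v t))
    (hpde : ∀ t x,
      deriv (fun s => ρ s x) t + divg (fun y => ρ t y • v t y) x - lap (ρ t) x = 0) :
    ∀ t x,
      deriv (fun s => (ρ s x)⁻¹) t - lap (fun y => (ρ t y)⁻¹) x +
          2 * ρ t x * (∑ i, (pd (fun y => (ρ t y)⁻¹) i x) ^ 2) +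
          (∑ i, v t x i * pd (fun y => (ρ t y)⁻¹) i x) -
          (ρ t x)⁻¹ * divg (v t) x = 0 := by
  intro t x
  have h0 : ∀ y, ρ t y ≠ 0 := fun y => (hpos t y).ne'
  have hd : Differentiable ℝ (ρ t) := (hρx t).differentiable (by norm_num)
  have hvd : Differentiable ℝ (v t) := (hv t).differentiable (by norm_num)
  have hvi : ∀ i, DifferentiableAt ℝ (fun y => v t y i) x := by
    intro i
    fun_prop
  have ht : DifferentiableAt ℝ (fun s => ρ s x) t := (hρt x).differentiable (by norm_num) t
  have hdt : deriv (fun s => (ρ s x)⁻¹) t = -(ρ t x)⁻¹ ^ 2 * deriv (fun s => ρ s x) t := by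
    have h : deriv (fun s => (ρ s x)⁻¹) t = _ := (ht.hasDerivAt.inv (h0 x)).deriv
    rw [h]
    field_simp
  have hdiv : ∀ i, pd (fun y => (ρ t y • v t y) i) i x =
      ρ t x * pd (fun y => v t y i) i x + v t x i * pd (ρ t) i x := by
    intro i
    exact pd_mul_aux (hd x) (hvi i) i
  have hp := hpde t x
  simp only [lap, divg, hdiv, Fin.sum_univ_three] at hp
  simp only [lap, divg, hdt, pd_pd_inv_aux (hρx t) h0 x, pd_inv_aux (hd x) (h0 x),
    Fin.sum_univ_three]
  have h1 : ρ t x * (ρ t x)⁻¹ = 1 := mul_inv_cancel₀ (h0 x)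
  have hx := h0 x
  generalize ρ t x = r at *
  field_simp
  linear_combination (-r) * hp
end

section
/- Let r > 1 and B ≥ 1 be real numbers, let l ∈ ℕ, and let f : ℕ → ℝ be nonnegative with f(k+1) ≤ B · r^{2rk} · f(k)^r for all k ≥ l. Then for every k ≥ l one has f(k+1)^{r^{−(k+1)}} ≤ B^{∑_{j=l+1}^{k+1} r^{−j}} · r^{2∑_{j=l+1}^{k+1} (j−1) r^{−(j−1)}} · f(l)^{r^{−l}}. -/
theorem stmt18 (r B : ℝ) (hr : 1 < r) (hB : 1 ≤ B) (l : ℕ) (f : ℕ → ℝ)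
    (hf : ∀ k, 0 ≤ f k)
    (hrec : ∀ k : ℕ, l ≤ k → f (k + 1) ≤ B * r ^ (2 * r * (k : ℝ)) * f k ^ r) :
    ∀ k : ℕ, l ≤ k →
      f (k + 1) ^ (r ^ (-((k : ℝ) + 1))) ≤
        B ^ (∑ j ∈ Finset.Icc (l + 1) (k + 1), r ^ (-(j : ℝ))) *
          r ^ (2 * ∑ j ∈ Finset.Icc (l + 1) (k + 1), ((j : ℝ) - 1) * r ^ (-((j : ℝ) - 1))) *
          f l ^ (r ^ (-(l : ℝ))) := by
  have hr0 : 0 < r := by linarith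
  have hB0 : 0 < B := by linarith
  have step : ∀ k : ℕ, l ≤ k → f (k + 1) ^ (r ^ (-((k : ℝ) + 1))) ≤
      B ^ (r ^ (-((k : ℝ) + 1))) * r ^ (2 * ((k : ℝ) * r ^ (-(k : ℝ)))) *
        f k ^ (r ^ (-(k : ℝ))) := by
    intro k hk
    have e : r * r ^ (-((k : ℝ) + 1)) = r ^ (-(k : ℝ)) := by
      rw [show -(k : ℝ) = 1 + -((k : ℝ) + 1) by ring, Real.rpow_add hr0, Real.rpow_one]
    have h := Real.rpow_le_rpow (hf _) (hrec k hk)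
      (Real.rpow_nonneg hr0.le (-((k : ℝ) + 1)))
    have hp : 0 ≤ r ^ (2 * r * (k : ℝ)) := Real.rpow_nonneg hr0.le _
    rw [Real.mul_rpow (mul_nonneg hB0.le hp) (Real.rpow_nonneg (hf k) _),
      Real.mul_rpow hB0.le hp, ← Real.rpow_mul hr0.le, ← Real.rpow_mul (hf k), e,
      show 2 * r * (k : ℝ) * r ^ (-((k : ℝ) + 1)) = 2 * (k * (r * r ^ (-((k : ℝ) + 1)))) by ring,
      e] at h
    exact h
  intro k hk
  induction k, hk using Nat.le_induction with
  | base =>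
    have h := step l le_rfl
    rw [Finset.Icc_self, Finset.sum_singleton, Finset.sum_singleton]
    push_cast
    rw [add_sub_cancel_right]
    exact h
  | succ k hk ih =>
    have h := step (k + 1) (by omega)
    have hs : ∀ g : ℕ → ℝ, ∑ j ∈ Finset.Icc (l + 1) (k + 1 + 1), g j =
        ∑ j ∈ Finset.Icc (l + 1) (k + 1), g j + g (k + 1 + 1) :=
      fun g => Finset.sum_Icc_succ_top (by omega) g
    rw [hs, hs, mul_add,
      Real.rpow_add hB0, Real.rpow_add hr0]
    refine h.trans ?_
    push_cast at ih ⊢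
    have h2 := mul_le_mul_of_nonneg_left ih (mul_nonneg
      (Real.rpow_nonneg hB0.le (r ^ (-((k : ℝ) + 1 + 1))))
      (Real.rpow_nonneg hr0.le (2 * (((k : ℝ) + 1) * r ^ (-((k : ℝ) + 1))))))
    refine h2.trans (le_of_eq ?_)
    rw [add_sub_cancel_right]
    ac_rfl
end
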